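/- arXiv:2103.00277 — 3 statements merged into one kernel-verified Lean document; each statement's English description precedes it below -/
import Mathlib

section
/- The precision matrices of the linear UKI covariance iteration converge exponentially fast to the posterior precision matrix with an uninformative prior: for every n ≥ 0 one has C_n⁻¹ − Gᵀ Σ_η⁻¹ G = 2⁻ⁿ (C_0⁻¹ − Gᵀ Σ_η⁻¹ G); in particular C_n⁻¹ converges to Gᵀ Σ_η⁻¹ G as n → ∞, with error decaying like 2⁻ⁿ in any matrix norm. -/
open Matrix Filter

/-!
In terms of precisions the Kalman update is addition: by the Woodbury identity the covariance
`P - P Gᴴ (G P Gᴴ + R)⁻¹ G P` has inverse `P⁻¹ + Gᴴ R⁻¹ G`. Inflating `P = a C`, `R = b Σ` with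
`a⁻¹ + b⁻¹ = 1` makes the new precision the convex combination `a⁻¹ C⁻¹ + b⁻¹ Gᴴ Σ⁻¹ G`, a
contraction by the factor `a⁻¹` towards `Gᴴ Σ⁻¹ G`; the UKI takes `a = b = 2`.
-/

section GeometricConvergence

lemma eq_pow_smul_of_succ_eq_smul {M α : Type*} [Monoid M] [MulAction M α] {c : M} {v : ℕ → α}
    (hv : ∀ k, v (k + 1) = c • v k) (k : ℕ) : v k = c ^ k • v 0 := by
  induction k with
  | zero => rw [pow_zero, one_smul]
  | succ k ih => rw [hv, ih, pow_succ', mul_smul]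

lemma tendsto_of_sub_eq_pow_smul {R E : Type*} [SeminormedRing R] [AddCommGroup E] [Module R E]
    [TopologicalSpace E] [ContinuousAdd E] [ContinuousSMul R E] {c : R} (hc : ‖c‖ < 1)
    {u : ℕ → E} {l d : E} (hu : ∀ k, u k - l = c ^ k • d) : Tendsto u atTop (nhds l) := by
  have hpow : Tendsto (fun k : ℕ => c ^ k) atTop (nhds 0) :=
    tendsto_pow_atTop_nhds_zero_of_norm_lt_one hc
  have hlim : Tendsto (fun k : ℕ => c ^ k • d + l) atTop (nhds l) := by
    simpa only [zero_smul, zero_add] using (hpow.smul_const d).add_const l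
  exact hlim.congr fun k => by rw [← hu k, sub_add_cancel]

end GeometricConvergence

lemma matrix_inv_inv {R n : Type*} [CommRing R] [Fintype n] [DecidableEq n] {A : Matrix n n R}
    (hA : IsUnit A) : A⁻¹⁻¹ = A :=
  nonsing_inv_nonsing_inv A ((isUnit_iff_isUnit_det A).1 hA)

lemma matrix_inv_smul {k R n : Type*} [Field k] [CommRing R] [Algebra k R] [Fintype n]
    [DecidableEq n] {c : k} (hc : c ≠ 0) {A : Matrix n n R} (hA : IsUnit A) :
    (c • A)⁻¹ = c⁻¹ • A⁻¹ :=
  inv_eq_left_inv <| by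
    rw [smul_mul_smul_comm, inv_mul_cancel₀ hc, one_smul,
      nonsing_inv_mul A ((isUnit_iff_isUnit_det A).1 hA)]

section KalmanUpdate

variable {K m n : Type*} [Field K] [StarRing K] [Fintype m] [Fintype n] [DecidableEq m]

/-- The covariance update (analysis step) of the Kalman filter: the posterior covariance of a
state with prior covariance `P` observed through `G` with noise covariance `R`. -/
noncomputable def kalmanUpdate (G : Matrix m n K) (R : Matrix m m K) (P : Matrix n n K) :
    Matrix n n K :=
  P - P * Gᴴ * (G * P * Gᴴ + R)⁻¹ * G * P

variable [PartialOrder K] [StarOrderedRing K] {R : Matrix m m K} {P : Matrix n n K}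

lemma posDef_inv_add_conjTranspose_mul_inv_mul [DecidableEq n] (G : Matrix m n K)
    (hR : R.PosDef) (hP : P.PosDef) : (P⁻¹ + Gᴴ * R⁻¹ * G).PosDef :=
  hP.inv.add_posSemidef (hR.inv.posSemidef.conjTranspose_mul_mul_same G)

lemma kalmanUpdate_eq_inv [DecidableEq n] (G : Matrix m n K) (hR : R.PosDef) (hP : P.PosDef) :
    kalmanUpdate G R P = (P⁻¹ + Gᴴ * R⁻¹ * G)⁻¹ := by
  have hPinv : P⁻¹⁻¹ = P := matrix_inv_inv hP.isUnit
  have hRinv : R⁻¹⁻¹ = R := matrix_inv_inv hR.isUnit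
  have hinnovation : IsUnit (R⁻¹⁻¹ + G * P⁻¹⁻¹ * Gᴴ) := by
    rw [hPinv, hRinv]
    exact (hR.add_posSemidef (hP.posSemidef.mul_mul_conjTranspose_same G)).isUnit
  rw [add_mul_mul_inv_eq_sub P⁻¹ Gᴴ R⁻¹ G hP.inv.isUnit hR.inv.isUnit hinnovation, hPinv, hRinv,
    add_comm R, kalmanUpdate]

lemma posDef_kalmanUpdate (G : Matrix m n K) (hR : R.PosDef) (hP : P.PosDef) :
    (kalmanUpdate G R P).PosDef := by
  classical
  rw [kalmanUpdate_eq_inv G hR hP]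
  exact (posDef_inv_add_conjTranspose_mul_inv_mul G hR hP).inv

lemma inv_kalmanUpdate [DecidableEq n] (G : Matrix m n K) (hR : R.PosDef) (hP : P.PosDef) :
    (kalmanUpdate G R P)⁻¹ = P⁻¹ + Gᴴ * R⁻¹ * G := by
  rw [kalmanUpdate_eq_inv G hR hP]
  exact matrix_inv_inv (posDef_inv_add_conjTranspose_mul_inv_mul G hR hP).isUnit

end KalmanUpdate

section InflatedIteration

open scoped ComplexOrder

variable {𝕜 m n : Type*} [RCLike 𝕜] [Fintype m] [Fintype n] [DecidableEq m] [DecidableEq n]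

lemma inv_kalmanUpdate_smul_sub {a b : ℝ} (hab : a.HolderConjugate b) (G : Matrix m n 𝕜)
    {S : Matrix m m 𝕜} (hS : S.PosDef) {P : Matrix n n 𝕜} (hP : P.PosDef) :
    (kalmanUpdate G (b • S) (a • P))⁻¹ - Gᴴ * S⁻¹ * G = a⁻¹ • (P⁻¹ - Gᴴ * S⁻¹ * G) := by
  rw [inv_kalmanUpdate G (hS.smul hab.symm.pos) (hP.smul hab.pos),
    matrix_inv_smul hab.ne_zero hP.isUnit, matrix_inv_smul hab.symm.ne_zero hS.isUnit,
    Matrix.mul_smul, Matrix.smul_mul, ← hab.one_sub_inv]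
  module

theorem linear_uki_precision_exponential_convergence_general {a b : ℝ}
    (hab : a.HolderConjugate b) (G : Matrix m n 𝕜) {S : Matrix m m 𝕜} (hS : S.PosDef)
    {C : ℕ → Matrix n n 𝕜} (hC0 : (C 0).PosDef)
    (hrec : ∀ k, C (k + 1) = kalmanUpdate G (b • S) (a • C k)) :
    (∀ k, (C k)⁻¹ - Gᴴ * S⁻¹ * G = a⁻¹ ^ k • ((C 0)⁻¹ - Gᴴ * S⁻¹ * G)) ∧
      Tendsto (fun k => (C k)⁻¹) atTop (nhds (Gᴴ * S⁻¹ * G)) := by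
  have hC : ∀ k, (C k).PosDef := fun k => by
    induction k with
    | zero => exact hC0
    | succ k ih =>
      rw [hrec]
      exact posDef_kalmanUpdate G (hS.smul hab.symm.pos) (ih.smul hab.pos)
  have herror : ∀ k, (C k)⁻¹ - Gᴴ * S⁻¹ * G = a⁻¹ ^ k • ((C 0)⁻¹ - Gᴴ * S⁻¹ * G) :=
    eq_pow_smul_of_succ_eq_smul (v := fun k => (C k)⁻¹ - Gᴴ * S⁻¹ * G) fun k => by
      rw [hrec, inv_kalmanUpdate_smul_sub hab G hS (hC k)]
  have hrate : ‖a⁻¹‖ < 1 := by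
    rw [Real.norm_of_nonneg hab.inv_nonneg]
    exact inv_lt_one_of_one_lt₀ hab.lt
  exact ⟨herror, tendsto_of_sub_eq_pow_smul hrate herror⟩

end InflatedIteration

/-- **Exponential convergence of the linear UKI precision matrices.** For the linear UKI
covariance iteration (with `Σ_ω = C_n`, `Σ_ν = 2Σ_η`), the precision matrices satisfy
`C_n⁻¹ − Gᵀ Σ_η⁻¹ G = 2⁻ⁿ (C_0⁻¹ − Gᵀ Σ_η⁻¹ G)` for every `n`; in particular `C_n⁻¹`
converges to the posterior precision matrix `Gᵀ Σ_η⁻¹ G` as `n → ∞`. -/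
theorem linear_uki_precision_exponential_convergence {Nθ Ny : ℕ}
    (G : Matrix (Fin Ny) (Fin Nθ) ℝ)
    (Sη : Matrix (Fin Ny) (Fin Ny) ℝ) (hSη : Sη.PosDef)
    (C : ℕ → Matrix (Fin Nθ) (Fin Nθ) ℝ) (hC0 : (C 0).PosDef)
    (hrec : ∀ n, C (n + 1) =
      (2 : ℝ) • C n -
        ((2 : ℝ) • C n) * Gᵀ * (G * ((2 : ℝ) • C n) * Gᵀ + (2 : ℝ) • Sη)⁻¹ * G *
          ((2 : ℝ) • C n)) :
    (∀ n, (C n)⁻¹ - Gᵀ * Sη⁻¹ * G = (2 : ℝ)⁻¹ ^ n • ((C 0)⁻¹ - Gᵀ * Sη⁻¹ * G)) ∧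
      Tendsto (fun n => (C n)⁻¹) atTop (nhds (Gᵀ * Sη⁻¹ * G)) := by
  simp only [← conjTranspose_eq_transpose_of_trivial] at hrec ⊢
  exact linear_uki_precision_exponential_convergence_general .two_two G hSη hC0 hrec
end

section
/- Assume additionally that G has trivial null space (equivalently, Gᵀ Σ_η⁻¹ G is symmetric positive definite). Then the covariance matrices of the linear UKI iteration converge to the posterior covariance with an uninformative prior: C_n → (Gᵀ Σ_η⁻¹ G)⁻¹ as n → ∞. -/
open Matrix Filter

/-!
By the Woodbury identity, a Kalman update adds `Gᴴ R⁻¹ G` to the precision `P⁻¹`. The iteration is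
therefore affine in the precision: `(C (n + 1))⁻¹` is the mean of `(C n)⁻¹` and `Gᵀ Sη⁻¹ G`, so
`(C n)⁻¹` converges geometrically to `Gᵀ Sη⁻¹ G`. The same happens whenever the covariance
is inflated by `p` and the noise by `q` with `p⁻¹ + q⁻¹ = 1`, these being the weights of a convex
combination.
-/

lemma eq_add_pow_smul_sub_of_succ_eq_smul_add_smul {K E : Type*} [Ring K] [AddCommGroup E]
    [Module K E] {a b : K} (hab : a + b = 1) {x : ℕ → E} {L : E}
    (hx : ∀ n, x (n + 1) = a • x n + b • L) (n : ℕ) : x n = L + a ^ n • (x 0 - L) := by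
  induction n with
  | zero => simp
  | succ n ih =>
    rw [hx, ih, eq_sub_of_add_eq' hab, pow_succ', mul_smul, sub_smul, one_smul, smul_add]
    abel

lemma tendsto_of_succ_eq_smul_add_smul {K E : Type*} [NormedField K] [AddCommGroup E]
    [TopologicalSpace E] [ContinuousAdd E] [Module K E] [ContinuousSMul K E] {a b : K}
    (hab : a + b = 1) (ha : ‖a‖ < 1) {x : ℕ → E} {L : E}
    (hx : ∀ n, x (n + 1) = a • x n + b • L) : Tendsto x atTop (nhds L) := by
  have hpow : Tendsto (fun n ↦ a ^ n) atTop (nhds 0) :=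
    tendsto_pow_atTop_nhds_zero_of_norm_lt_one ha
  rw [funext (eq_add_pow_smul_sub_of_succ_eq_smul_add_smul hab hx)]
  simpa using (hpow.smul_const (x 0 - L)).const_add L

lemma matrix_inv_smul_of_isUnit {n K R : Type*} [Fintype n] [DecidableEq n] [Field K] [CommRing R]
    [Algebra K R] {k : K} (hk : k ≠ 0) {A : Matrix n n R} (hA : IsUnit A) :
    (k • A)⁻¹ = k⁻¹ • A⁻¹ :=
  inv_eq_left_inv <| by
    simp [smul_smul, hk, nonsing_inv_mul A ((isUnit_iff_isUnit_det A).1 hA)]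

lemma continuousAt_matrix_inv_of_isUnit {n K : Type*} [Fintype n] [DecidableEq n] [Field K]
    [TopologicalSpace K] [IsTopologicalDivisionRing K] {A : Matrix n n K} (hA : IsUnit A) :
    ContinuousAt Inv.inv A := by
  refine continuousAt_matrix_inv A ?_
  rw [Ring.inverse_eq_inv']
  exact continuousAt_inv₀ ((isUnit_iff_isUnit_det A).1 hA).ne_zero

section KalmanUpdate

variable {m n : Type*} [Fintype m] [Fintype n] [DecidableEq m] [DecidableEq n]

/-- The covariance after a Kalman update: a state of prior covariance `P` is observed through the
linear map `G` with noise covariance `R`. -/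
noncomputable def kalmanCovariance {K : Type*} [CommRing K] [Star K]
    (G : Matrix m n K) (R : Matrix m m K) (P : Matrix n n K) : Matrix n n K :=
  P - P * Gᴴ * (G * P * Gᴴ + R)⁻¹ * G * P

section OrderedField

variable {K : Type*} [Field K] [PartialOrder K] [StarRing K] [StarOrderedRing K]
  {R : Matrix m m K} {P : Matrix n n K}

lemma kalmanCovariance_eq_inv (G : Matrix m n K) (hR : R.PosDef) (hP : P.PosDef) :
    kalmanCovariance G R P = (P⁻¹ + Gᴴ * R⁻¹ * G)⁻¹ := by
  have hinnov : IsUnit (R + G * P * Gᴴ) :=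
    (hR.add_posSemidef (hP.posSemidef.mul_mul_conjTranspose_same G)).isUnit
  let := hR.isUnit.invertible
  let := hP.isUnit.invertible
  rw [add_mul_mul_inv_eq_sub P⁻¹ Gᴴ R⁻¹ G hP.inv.isUnit hR.inv.isUnit (by simpa using hinnov),
    inv_inv_of_invertible, inv_inv_of_invertible, add_comm R, kalmanCovariance]

lemma posDef_precision_add (G : Matrix m n K) (hR : R.PosDef) (hP : P.PosDef) :
    (P⁻¹ + Gᴴ * R⁻¹ * G).PosDef :=
  hP.inv.add_posSemidef (hR.inv.posSemidef.conjTranspose_mul_mul_same G)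

omit [DecidableEq n] in
lemma posDef_kalmanCovariance (G : Matrix m n K) (hR : R.PosDef) (hP : P.PosDef) :
    (kalmanCovariance G R P).PosDef := by
  classical
  rw [kalmanCovariance_eq_inv G hR hP]
  exact (posDef_precision_add G hR hP).inv

lemma inv_kalmanCovariance (G : Matrix m n K) (hR : R.PosDef) (hP : P.PosDef) :
    (kalmanCovariance G R P)⁻¹ = P⁻¹ + Gᴴ * R⁻¹ * G := by
  let := (posDef_precision_add G hR hP).isUnit.invertible
  rw [kalmanCovariance_eq_inv G hR hP, inv_inv_of_invertible]

end OrderedField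

section RCLike

variable {𝕜 : Type*} [RCLike 𝕜] {S : Matrix m m 𝕜}

open scoped ComplexOrder

lemma inv_kalmanCovariance_smul_smul (G : Matrix m n 𝕜) (hS : S.PosDef)
    {P : Matrix n n 𝕜} (hP : P.PosDef) {p q : ℝ} (hp : 0 < p) (hq : 0 < q) :
    (kalmanCovariance G (q • S) (p • P))⁻¹ = p⁻¹ • P⁻¹ + q⁻¹ • (Gᴴ * S⁻¹ * G) := by
  rw [inv_kalmanCovariance G (hS.smul hq) (hP.smul hp), matrix_inv_smul_of_isUnit hp.ne' hP.isUnit,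
    matrix_inv_smul_of_isUnit hq.ne' hS.isUnit, Matrix.mul_smul, Matrix.smul_mul]

theorem linear_uki_covariance_convergence_general (G : Matrix m n 𝕜) (hS : S.PosDef)
    (hG : (Gᴴ * S⁻¹ * G).PosDef) {p q : ℝ} (hpq : p.HolderConjugate q)
    {C : ℕ → Matrix n n 𝕜} (hC0 : (C 0).PosDef)
    (hrec : ∀ k, C (k + 1) = kalmanCovariance G (q • S) (p • C k)) :
    Tendsto C atTop (nhds (Gᴴ * S⁻¹ * G)⁻¹) := by
  have hC (k : ℕ) : (C k).PosDef := by
    induction k with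
    | zero => exact hC0
    | succ k ih =>
      rw [hrec]
      exact posDef_kalmanCovariance G (hS.smul hpq.symm.pos) (ih.smul hpq.pos)
  have hprecision : Tendsto (fun k ↦ (C k)⁻¹) atTop (nhds (Gᴴ * S⁻¹ * G)) := by
    refine tendsto_of_succ_eq_smul_add_smul hpq.inv_add_inv_eq_one ?_ fun k ↦ ?_
    · rw [Real.norm_of_nonneg hpq.inv_nonneg]
      exact inv_lt_one_of_one_lt₀ hpq.lt
    · rw [hrec, inv_kalmanCovariance_smul_smul G hS (hC k) hpq.pos hpq.symm.pos]
  refine ((continuousAt_matrix_inv_of_isUnit hG.isUnit).tendsto.comp hprecision).congr fun k ↦ ?_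
  let := (hC k).isUnit.invertible
  exact inv_inv_of_invertible (C k)

end RCLike

end KalmanUpdate

/-- **Convergence of the linear UKI covariances to the posterior covariance.** If `G` has trivial
null space (equivalently `Gᵀ Σ_η⁻¹ G` is symmetric positive definite), then the linear UKI
covariance iteration (with `Σ_ω = C_n`, `Σ_ν = 2Σ_η`) satisfies
`C_n → (Gᵀ Σ_η⁻¹ G)⁻¹` as `n → ∞`. -/
theorem linear_uki_covariance_convergence {Nθ Ny : ℕ}
    (G : Matrix (Fin Ny) (Fin Nθ) ℝ)
    (Sη : Matrix (Fin Ny) (Fin Ny) ℝ) (hSη : Sη.PosDef)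
    (hG : (Gᵀ * Sη⁻¹ * G).PosDef)
    (C : ℕ → Matrix (Fin Nθ) (Fin Nθ) ℝ) (hC0 : (C 0).PosDef)
    (hrec : ∀ n, C (n + 1) =
      (2 : ℝ) • C n -
        ((2 : ℝ) • C n) * Gᵀ * (G * ((2 : ℝ) • C n) * Gᵀ + (2 : ℝ) • Sη)⁻¹ * G *
          ((2 : ℝ) • C n)) :
    Tendsto (fun n => C n) atTop (nhds (Gᵀ * Sη⁻¹ * G)⁻¹) :=
  -- Over `ℝ` conjugation is the identity by definition, so `ᴴ` and `ᵀ` agree definitionally.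
  linear_uki_covariance_convergence_general G hSη hG .two_two hC0 hrec
end

section
/- Let G : ℝ^N → ℝ^N be a differentiable bijection with derivative (Jacobian matrix) dG(θ) at θ, let y ∈ ℝ^N, and let Σ_η be a symmetric positive definite N × N matrix. Suppose m* ∈ ℝ^N and the symmetric N × N matrix C* form a stationary point of the ExKI iteration with Σ_ω = C* and Σ_ν = 2Σ_η, i.e., setting Ĉ = 2C*: m* = m* + Ĉ dG(m*)ᵀ (dG(m*) Ĉ dG(m*)ᵀ + 2Σ_η)⁻¹ (y − G(m*)) and C* = Ĉ − Ĉ dG(m*)ᵀ (dG(m*) Ĉ dG(m*)ᵀ + 2Σ_η)⁻¹ dG(m*) Ĉ. If both C* and dG(m*) are invertible, then G(m*) = y (equivalently m* = G⁻¹(y)) and C*⁻¹ = dG(m*)ᵀ Σ_η⁻¹ dG(m*). -/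
open Matrix

/-!
Write `Ĉ = 2C` and let `K = Ĉ Jᵀ (J Ĉ Jᵀ + 2Σ)⁻¹` be the gain, where `J = dG(m*)`. The covariance
equation reads `K J Ĉ = C`, so cancelling the invertible `C` shows that `K` and `2J` are mutually
inverse square matrices. Injectivity of `K` turns the mean equation into `G(m*) = y`. The gain
identity `K (2Σ) = (Ĉ - K J Ĉ) Jᵀ = C Jᵀ`, multiplied on the left by `J`, becomes `Σ = J C Jᵀ`,
which inverts to the claim.
-/

section KalmanGain

variable {R m n : Type*} [CommRing R] [Fintype m] [DecidableEq m] [Fintype n]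
  {P : Matrix n n R} {J : Matrix m n R} {S : Matrix m m R}

/-- The Kalman gain for prediction covariance `P`, linearized observation operator `J` and
observation covariance `S`. When the innovation covariance `J * P * Jᵀ + S` is singular, the
convention for `Matrix.inv` makes the gain `0`. -/
noncomputable def kalmanGain (P : Matrix n n R) (J : Matrix m n R) (S : Matrix m m R) :
    Matrix n m R :=
  P * Jᵀ * (J * P * Jᵀ + S)⁻¹

theorem isUnit_det_of_mul_kalmanGain_eq_one {L : Matrix m n R} (hL : L * kalmanGain P J S = 1) :
    IsUnit (J * P * Jᵀ + S).det := by
  have left_inverse : L * (P * Jᵀ) * (J * P * Jᵀ + S)⁻¹ = 1 := by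
    rwa [Matrix.mul_assoc]
  exact isUnit_nonsing_inv_det_iff.mp (isUnit_det_of_left_inverse left_inverse)

theorem kalmanGain_mul_observationCov (hM : IsUnit (J * P * Jᵀ + S).det) :
    kalmanGain P J S * S = (P - kalmanGain P J S * J * P) * Jᵀ := by
  have gain_mul_innovationCov : kalmanGain P J S * (J * P * Jᵀ + S) = P * Jᵀ :=
    nonsing_inv_mul_cancel_right _ _ hM
  rw [Matrix.sub_mul, ← gain_mul_innovationCov, Matrix.mul_add]
  simp only [Matrix.mul_assoc, add_sub_cancel_left]

end KalmanGain

section FixedPoint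

variable {R m n : Type*} [CommRing R] [Fintype m] [Fintype n] [DecidableEq n]

theorem mul_two_smul_eq_one_of_covariance_fixed {C : Matrix n n R} {K : Matrix n m R}
    {J : Matrix m n R} (hC : IsUnit C.det)
    (hfix : C = (2 : R) • C - K * J * ((2 : R) • C)) : K * ((2 : R) • J) = 1 := by
  have gain_mul : K * ((2 : R) • J) * C = C := by
    rw [Matrix.mul_smul, Matrix.smul_mul, ← Matrix.mul_smul]
    rw [eq_sub_iff_add_eq, two_smul R C] at hfix
    simpa only [two_smul] using add_left_cancel hfix
  rw [← mul_nonsing_inv_cancel_right C (K * ((2 : R) • J)) hC, gain_mul, mul_nonsing_inv C hC]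

theorem eq_of_mean_fixed {L : Matrix n m R} {K : Matrix m n R} (hLK : L * K = 1)
    {x : m → R} {y z : n → R} (hfix : x = x + K *ᵥ (y - z)) : z = y := by
  have gain_mulVec : K *ᵥ (y - z) = 0 := left_eq_add.mp hfix
  have residual : y - z = 0 := by
    rw [← one_mulVec (y - z), ← hLK, ← mulVec_mulVec, gain_mulVec, mulVec_zero]
  exact (sub_eq_zero.mp residual).symm

theorem observationCov_eq_of_covariance_fixed {C J S : Matrix n n R} (hC : IsUnit C.det)
    (hfix : C = (2 : R) • C -
      kalmanGain ((2 : R) • C) J ((2 : R) • S) * J * ((2 : R) • C)) :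
    S = J * C * Jᵀ := by
  have hJK : ((2 : R) • J) * kalmanGain ((2 : R) • C) J ((2 : R) • S) = 1 :=
    mul_eq_one_comm.mp (mul_two_smul_eq_one_of_covariance_fixed hC hfix)
  have gain_mul : kalmanGain ((2 : R) • C) J ((2 : R) • S) * ((2 : R) • S) = C * Jᵀ := by
    rw [kalmanGain_mul_observationCov (isUnit_det_of_mul_kalmanGain_eq_one hJK), ← hfix]
  calc
    S = ((2 : R) • J) * kalmanGain ((2 : R) • C) J ((2 : R) • S) * S := by
      rw [hJK, Matrix.one_mul]
    _ = J * (kalmanGain ((2 : R) • C) J ((2 : R) • S) * ((2 : R) • S)) := by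
      simp only [Matrix.smul_mul, Matrix.mul_smul, Matrix.mul_assoc]
    _ = J * C * Jᵀ := by rw [gain_mul, Matrix.mul_assoc]

theorem transpose_mul_inv_congruence_mul {J : Matrix n n R} (hJ : IsUnit J.det)
    (C : Matrix n n R) : Jᵀ * (J * C * Jᵀ)⁻¹ * J = C⁻¹ := by
  rw [Matrix.mul_inv_rev, Matrix.mul_inv_rev,
    mul_nonsing_inv_cancel_left _ _ (isUnit_det_transpose J hJ),
    nonsing_inv_mul_cancel_right _ _ hJ]

end FixedPoint

theorem exki_stationary_point_general {𝕜 n : Type*} [NontriviallyNormedField 𝕜]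
    [CompleteSpace 𝕜] [Fintype n] [DecidableEq n] {G : (n → 𝕜) → (n → 𝕜)} {x y : n → 𝕜}
    {J C S : Matrix n n 𝕜}
    (_hG : HasFDerivAt G (LinearMap.toContinuousLinearMap (Matrix.toLin' J)) x)
    (hmean : x = x + kalmanGain ((2 : 𝕜) • C) J ((2 : 𝕜) • S) *ᵥ (y - G x))
    (hcov : C = (2 : 𝕜) • C -
      kalmanGain ((2 : 𝕜) • C) J ((2 : 𝕜) • S) * J * ((2 : 𝕜) • C))
    (hC : IsUnit C.det) : G x = y ∧ C⁻¹ = Jᵀ * S⁻¹ * J := by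
  have hKJ : kalmanGain ((2 : 𝕜) • C) J ((2 : 𝕜) • S) * ((2 : 𝕜) • J) = 1 :=
    mul_two_smul_eq_one_of_covariance_fixed hC hcov
  have hJ : IsUnit J.det := by
    rw [Matrix.mul_smul, ← Matrix.smul_mul] at hKJ
    exact isUnit_det_of_left_inverse hKJ
  refine ⟨eq_of_mean_fixed (mul_eq_one_comm.mp hKJ) hmean, ?_⟩
  rw [observationCov_eq_of_covariance_fixed hC hcov, transpose_mul_inv_congruence_mul hJ]

/-- **Stationary points of the ExKI iteration.** Let `G : ℝ^N → ℝ^N` be a differentiable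
bijection with Jacobian matrix `dG(θ)`, let `y ∈ ℝ^N`, and let `Σ_η` be symmetric positive
definite. If `(m*, C*)` (with `C*` symmetric) is a stationary point of the ExKI iteration with
`Σ_ω = C*`, `Σ_ν = 2Σ_η` (so `Ĉ = 2C*`), and both `C*` and `dG(m*)` are invertible, then
`G(m*) = y` and `C*⁻¹ = dG(m*)ᵀ Σ_η⁻¹ dG(m*)`. -/
theorem exki_stationary_point {N : ℕ}
    (G : (Fin N → ℝ) → (Fin N → ℝ)) (hGbij : Function.Bijective G)
    (dG : (Fin N → ℝ) → Matrix (Fin N) (Fin N) ℝ)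
    (hdG : ∀ θ, HasFDerivAt G
      (LinearMap.toContinuousLinearMap (Matrix.toLin' (dG θ))) θ)
    (y : Fin N → ℝ)
    (Sη : Matrix (Fin N) (Fin N) ℝ) (hSη : Sη.PosDef)
    (mstar : Fin N → ℝ) (Cstar : Matrix (Fin N) (Fin N) ℝ)
    (hCsym : Cstar.IsHermitian)
    (hmfix : mstar = mstar +
      (((2 : ℝ) • Cstar) * (dG mstar)ᵀ *
        ((dG mstar) * ((2 : ℝ) • Cstar) * (dG mstar)ᵀ + (2 : ℝ) • Sη)⁻¹).mulVec
        (y - G mstar))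
    (hCfix : Cstar = (2 : ℝ) • Cstar -
      ((2 : ℝ) • Cstar) * (dG mstar)ᵀ *
        ((dG mstar) * ((2 : ℝ) • Cstar) * (dG mstar)ᵀ + (2 : ℝ) • Sη)⁻¹ *
        (dG mstar) * ((2 : ℝ) • Cstar))
    (hCunit : IsUnit Cstar.det) (hdGunit : IsUnit (dG mstar).det) :
    G mstar = y ∧ Cstar⁻¹ = (dG mstar)ᵀ * Sη⁻¹ * (dG mstar) :=
  exki_stationary_point_general (hdG mstar) hmfix hCfix hCunit
end
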